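/- Let n ≥ 3 and α ≥ 0, or n = 2 and α > 0; let 0 < μ < μ*(n,α), p = p_S(n+μ,α), and q := (n−μ−1)/2 − 1/p. Then there exist constants c, C > 0 such that for all t ≥ 1: b_q(t,x) ≥ c t^{−q} for every x ∈ ℝⁿ, and b_q(t,x) ≤ C t^{−q} for every x with |x| ≤ t+1. -/

import Mathlib

/-!
Substituting `s = λ t` gives `b_q(t, x) = t^{-q} ∫_0^t h(s) φ(s x / t) s^{q-1} ds`, so everything
rests on two-sided control of the integrand independently of `t`.

*Lower bound.* By antipodal symmetry `φ ≥ σ(S^{n-1})` (`le_phi`), so the integral over `0 < s ≤ 1`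
of the positive function `h(s) s^{q-1}` already gives the constant `c`.

*Upper bound.* One has `φ(x) ≲ e^{|x|} (1 + |x|)^{-(n-1)/2}` (`phi_upper`); this comes from
integrating in polar coordinates a Gaussian of variance `|x|` centred at `x`. Further,
`K_ν(s) ≲ s^{-1/2} e^{-s}` for `s ≥ 1` (`besselK_large`) and `K_ν(s) ≲ s^{-b}` for any `b > |ν|`
(`besselK_small`). For `|x| ≤ t + 1` the exponentials cancel and the integrand is dominated by a
function `G(s)` integrable on `(0, ∞)` (`majorant`).

*Exponents.* At infinity `G(s)` is of order `s^{-1/p - 1}`. Near `0`, `h(s) s^{q-1}` is integrable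
when `q > -min(1, μ)`: `q + μ > 0` follows from the quadratic equation for `p`, and `q > -1` is
equivalent to `1/p < n/(n+2+α)`, that is, to `μ < μ*(n, α)` (`exponent_ineqs`).
-/

noncomputable section

open MeasureTheory
open scoped RealInnerProductSpace

/-- `γ(n,μ,α,p) = 2+(n+μ+1+2α)p−(n+μ−1)p²`. -/
def gam (n μ α p : ℝ) : ℝ := 2 + (n + μ + 1 + 2 * α) * p - (n + μ - 1) * p ^ 2

/-- `p_S(d,α)`: the positive root of `2+(d+1+2α)p−(d−1)p² = 0` (here `d = n+μ`). -/
def pS (d α : ℝ) : ℝ :=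
  ((d + 1 + 2 * α) + Real.sqrt ((d + 1 + 2 * α) ^ 2 + 8 * (d - 1))) / (2 * (d - 1))

/-- `μ*(n,α)`. -/
def muStar (n α : ℝ) : ℝ :=
  (2 * n ^ 2 + (n + 2 + α) * (n * α + 2 + α)) / ((n + 2 + α) * (2 + α))

/-- The modified Bessel function of the second kind,
`K_ν(t) = ∫_0^∞ e^{−t cosh s} cosh(νs) ds`. -/
def besselK (ν t : ℝ) : ℝ :=
  ∫ s in Set.Ioi (0 : ℝ), Real.exp (-t * Real.cosh s) * Real.cosh (ν * s)

/-- `h(t) = t^{(μ+1)/2} K_{(μ−1)/2}(t)`. -/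
def hEPD (μ t : ℝ) : ℝ := t ^ ((μ + 1) / 2) * besselK ((μ - 1) / 2) t

/-- The surface measure `σ` on the unit sphere `S^{n-1} ⊂ ℝⁿ`. -/
def sphMeasure (n : ℕ) : Measure (Metric.sphere (0 : EuclideanSpace ℝ (Fin n)) 1) :=
  (volume : Measure (EuclideanSpace ℝ (Fin n))).toSphere

/-- `φ(x) = ∫_{S^{n-1}} e^{x·ω} dσ(ω)`. -/
def phi (n : ℕ) (x : EuclideanSpace ℝ (Fin n)) : ℝ :=
  ∫ ω, Real.exp ⟪x, (ω : EuclideanSpace ℝ (Fin n))⟫ ∂(sphMeasure n)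

/-- `b_q(t,x) = ∫_0^1 h(λt) φ(λx) λ^{q−1} dλ`. -/
def bq (n : ℕ) (μ q : ℝ) (t : ℝ) (x : EuclideanSpace ℝ (Fin n)) : ℝ :=
  ∫ lam in Set.Ioc (0 : ℝ) 1, hEPD μ (lam * t) * phi n (lam • x) * lam ^ (q - 1)


/-! ### The spherical average of the exponential -/

/-- The surface measure is invariant under the antipodal map, because Lebesgue measure is. -/
lemma neg_map_sphMeasure (n : ℕ) :
    MeasurePreserving (fun ω : Metric.sphere (0 : EuclideanSpace ℝ (Fin n)) 1 => -ω)
      (sphMeasure n) (sphMeasure n) := by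
  have hm : Measurable (fun ω : Metric.sphere (0 : EuclideanSpace ℝ (Fin n)) 1 => -ω) :=
    continuous_neg.measurable
  refine ⟨hm, ?_⟩
  ext s hs
  rw [Measure.map_apply hm hs, sphMeasure, Measure.toSphere_apply' _ hs,
    Measure.toSphere_apply' _ (hm hs)]
  congr 1
  rw [← Measure.measure_neg]
  congr 1
  ext y
  simp only [Set.mem_neg, Set.mem_smul, Set.mem_image, Set.mem_preimage]
  constructor
  · rintro ⟨r, hr, _, ⟨w, hw, rfl⟩, h⟩
    refine ⟨r, hr, _, ⟨-w, hw, rfl⟩, ?_⟩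
    simp [h]
  · rintro ⟨r, hr, _, ⟨w, hw, rfl⟩, h⟩
    refine ⟨r, hr, _, ⟨-w, by simpa using hw, rfl⟩, ?_⟩
    simp [h]

instance (n : ℕ) : IsFiniteMeasure (sphMeasure n) := by
  unfold sphMeasure; infer_instance

lemma inner_sphere_le {n : ℕ} (x : EuclideanSpace ℝ (Fin n))
    (ω : Metric.sphere (0 : EuclideanSpace ℝ (Fin n)) 1) :
    ⟪x, (ω : EuclideanSpace ℝ (Fin n))⟫ ≤ ‖x‖ := by
  have h := real_inner_le_norm x (ω : EuclideanSpace ℝ (Fin n))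
  simpa using h

lemma phi_integrable {n : ℕ} (x : EuclideanSpace ℝ (Fin n)) :
    Integrable (fun ω : Metric.sphere (0 : EuclideanSpace ℝ (Fin n)) 1 =>
      Real.exp ⟪x, (ω : EuclideanSpace ℝ (Fin n))⟫) (sphMeasure n) := by
  refine Integrable.of_bound (C := Real.exp ‖x‖) ?_ ?_
  · exact Continuous.aestronglyMeasurable (by fun_prop)
  · refine .of_forall fun ω => ?_
    rw [Real.norm_eq_abs, abs_of_pos (Real.exp_pos _)]
    exact Real.exp_le_exp.2 (inner_sphere_le x ω)

lemma phi_le_exp {n : ℕ} (x : EuclideanSpace ℝ (Fin n)) :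
    phi n x ≤ (sphMeasure n).real Set.univ * Real.exp ‖x‖ := by
  unfold phi
  calc _ ≤ ∫ ω : Metric.sphere (0 : EuclideanSpace ℝ (Fin n)) 1, Real.exp ‖x‖ ∂(sphMeasure n) :=
        integral_mono (phi_integrable x) (integrable_const _)
          fun ω => Real.exp_le_exp.2 (inner_sphere_le x ω)
    _ = _ := by simp

/-- Averaging `φ(x)` with `φ(-x) = φ(x)` turns the integrand into `cosh (x·ω) ≥ 1`. -/
lemma le_phi {n : ℕ} (x : EuclideanSpace ℝ (Fin n)) :
    (sphMeasure n).real Set.univ ≤ phi n x := by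
  have h1 : phi n (-x) = phi n x := by
    unfold phi
    rw [← (neg_map_sphMeasure n).integral_comp
      (Homeomorph.neg _).measurableEmbedding]
    simp
  have h2 : (∫ ω : Metric.sphere (0 : EuclideanSpace ℝ (Fin n)) 1, (2 : ℝ) ∂(sphMeasure n))
      ≤ phi n x + phi n (-x) := by
    unfold phi
    rw [← integral_add (phi_integrable x) (phi_integrable (-x))]
    refine integral_mono (integrable_const _) ((phi_integrable x).add (phi_integrable (-x))) ?_
    intro ω
    have h := Real.one_le_cosh ⟪x, (ω : EuclideanSpace ℝ (Fin n))⟫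
    rw [Real.cosh_eq] at h
    simp only [inner_neg_left]
    linarith
  rw [h1] at h2
  simp at h2
  linarith

lemma sphMeasure_univ_pos {n : ℕ} (hn : 2 ≤ n) : 0 < (sphMeasure n).real Set.univ := by
  unfold sphMeasure
  rw [Measure.toSphere_real_apply_univ]
  have : 0 < (volume : Measure (EuclideanSpace ℝ (Fin n))).real (Metric.ball 0 1) :=
    ENNReal.toReal_pos (Metric.measure_ball_pos _ _ one_pos).ne' measure_ball_lt_top.ne
  have h2 : (0 : ℝ) < n := by positivity
  simpa using mul_pos h2 this

/-- The shell `J = [R - √R, R)` has radial mass at least `Rⁿ √R / (n + 1)`. -/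
lemma volumeIoiPow_shell (n : ℕ) {R : ℝ} (hR : 1 < R) :
    ∃ J : Set (Set.Ioi (0 : ℝ)), MeasurableSet J ∧
      (∀ r ∈ J, R - √R ≤ (r : ℝ) ∧ (r : ℝ) < R) ∧
      Measure.volumeIoiPow n J < ⊤ ∧
      R ^ n * √R / (n + 1) ≤ (Measure.volumeIoiPow n).real J := by
  have hs1 : 1 < √R := by rw [Real.lt_sqrt] <;> simp [hR]
  have hs2 : √R * √R = R := Real.mul_self_sqrt (by linarith)
  have hs3 : √R < R := by nlinarith
  set a : Set.Ioi (0 : ℝ) := ⟨R, by simp; linarith⟩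
  set b : Set.Ioi (0 : ℝ) := ⟨R - √R, by simpa using hs3⟩
  have hba : Set.Iio b ⊆ Set.Iio a := Set.Iio_subset_Iio (by
    show R - √R ≤ R; linarith)
  have hfin : Measure.volumeIoiPow n (Set.Iio a) < ⊤ := by
    rw [Measure.volumeIoiPow_apply_Iio]; exact ENNReal.ofReal_lt_top
  refine ⟨Set.Iio a \ Set.Iio b, measurableSet_Iio.diff measurableSet_Iio, ?_,
    (measure_mono Set.sdiff_subset).trans_lt hfin, ?_⟩
  · rintro r ⟨h1, h2⟩
    exact ⟨not_lt.1 h2, h1⟩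
  · rw [measureReal_sdiff hba measurableSet_Iio (h₁ := hfin.ne)]
    simp only [Measure.real, Measure.volumeIoiPow_apply_Iio]
    have hb0 : 0 ≤ R - √R := by linarith
    have hR0 : 0 ≤ R := by linarith
    rw [ENNReal.toReal_ofReal (by simp only [a]; positivity),
      ENNReal.toReal_ofReal (by simp only [b]; positivity)]
    simp only [a, b]
    rw [← sub_div]
    gcongr
    have : (R - √R) ^ n ≤ R ^ n := by gcongr; linarith
    rw [pow_succ, pow_succ]
    nlinarith

/-- The Gaussian of variance `‖x‖` centred at `x`, integrated in polar coordinates `y = r ω` over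
the shell `‖x‖ - √‖x‖ ≤ r < ‖x‖`: there it is at least `e^{-1/2 - ‖x‖} e^{x·ω}`, so its total mass
bounds `φ(x)`. -/
lemma phi_gauss {n : ℕ} (hn : 2 ≤ n) (x : EuclideanSpace ℝ (Fin n)) (hx : 1 < ‖x‖) :
    phi n x * Real.exp (-1 / 2 - ‖x‖) * (‖x‖ ^ (n - 1) * √‖x‖ / n) ≤
      (2 * Real.pi * ‖x‖) ^ ((n : ℝ) / 2) := by
  set R := ‖x‖ with hR
  have hR0 : 0 < R := by linarith
  set b : ℝ := 1 / (2 * R) with hb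
  have hb0 : 0 < b := by positivity
  let f : EuclideanSpace ℝ (Fin n) → ℝ := fun y => Real.exp (-b * ‖y - x‖ ^ 2)
  have hI : ∫ y, f y = (2 * Real.pi * R) ^ ((n : ℝ) / 2) := by
    simp only [f]
    rw [integral_sub_right_eq_self (fun y : EuclideanSpace ℝ (Fin n) => Real.exp (-b * ‖y‖ ^ 2)) x,
      GaussianFourier.integral_rexp_neg_mul_sq_norm hb0]
    simp only [finrank_euclideanSpace, Fintype.card_fin]
    congr 1
    rw [hb]; field_simp
  have hfi : Integrable f := by
    by_contra h
    rw [integral_undef h] at hI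
    have : 0 < (2 * Real.pi * R) ^ ((n : ℝ) / 2) := by positivity
    linarith
  have : Nonempty (Fin n) := ⟨⟨0, by omega⟩⟩
  have hmp := (volume : Measure (EuclideanSpace ℝ (Fin n))).measurePreserving_homeomorphUnitSphereProd
  have hme := (homeomorphUnitSphereProd (EuclideanSpace ℝ (Fin n))).measurableEmbedding
  have hdim : Module.finrank ℝ (EuclideanSpace ℝ (Fin n)) = n := by simp
  rw [hdim] at hmp
  let g : Metric.sphere (0 : EuclideanSpace ℝ (Fin n)) 1 × Set.Ioi (0 : ℝ) → ℝ :=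
    fun z => f ((z.2 : ℝ) • (z.1 : EuclideanSpace ℝ (Fin n)))
  have hfc : ∀ y : ({0}ᶜ : Set (EuclideanSpace ℝ (Fin n))),
      g (homeomorphUnitSphereProd _ y) = f y := by
    intro y
    have h := congrArg Subtype.val ((homeomorphUnitSphereProd _).symm_apply_apply y)
    rw [homeomorphUnitSphereProd_symm_apply_coe] at h
    simp only [g, h]
  have hg1 : ∫ z, g z ∂((sphMeasure n).prod (Measure.volumeIoiPow (n - 1))) = ∫ y, f y := by
    rw [sphMeasure, ← hmp.integral_comp hme]
    simp only [hfc]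
    rw [integral_subtype_comap (measurableSet_singleton _).compl, restrict_compl_singleton]
  have hg2 : Integrable g ((sphMeasure n).prod (Measure.volumeIoiPow (n - 1))) := by
    rw [sphMeasure, ← hmp.integrable_comp_emb hme]
    have h3 : g ∘ homeomorphUnitSphereProd _ = f ∘ Subtype.val := funext hfc
    rw [h3, ← integrableOn_iff_comap_subtypeVal (measurableSet_singleton _).compl]
    exact hfi.integrableOn
  obtain ⟨J, hJm, hJ, hJf, hJv⟩ := volumeIoiPow_shell (n - 1) hx
  have hJi : Integrable (J.indicator fun _ => (1 : ℝ)) (Measure.volumeIoiPow (n - 1)) :=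
    (integrable_indicator_iff hJm).2 (integrableOn_const hJf.ne)
  have hle : ∫ z, Real.exp ⟪x, (z.1 : EuclideanSpace ℝ (Fin n))⟫ *
      (Real.exp (-1 / 2 - R) * J.indicator (fun _ => (1 : ℝ)) z.2)
        ∂((sphMeasure n).prod (Measure.volumeIoiPow (n - 1))) ≤
      ∫ z, g z ∂((sphMeasure n).prod (Measure.volumeIoiPow (n - 1))) := by
    refine integral_mono ((phi_integrable x).mul_prod (hJi.const_mul _)) hg2 ?_
    rintro ⟨ω, r⟩
    by_cases hr : r ∈ J
    · simp only [hr, Set.indicator_of_mem, mul_one, ← Real.exp_add, g, f]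
      refine Real.exp_le_exp.2 ?_
      obtain ⟨h1, h2⟩ := hJ r hr
      have hu := inner_sphere_le x ω
      set u := ⟪x, (ω : EuclideanSpace ℝ (Fin n))⟫ with hudef
      have hn2 : ‖(r : ℝ) • (ω : EuclideanSpace ℝ (Fin n)) - x‖ ^ 2
          = (r : ℝ) ^ 2 - 2 * r * u + R ^ 2 := by
        rw [norm_sub_sq_real, norm_smul, real_inner_smul_left, real_inner_comm, ← hudef]
        simp
        ring
      rw [hn2, hb]
      have hs2 : √R * √R = R := Real.mul_self_sqrt hR0.le
      -- equivalent to `(r - R)² + 2 r (R - u) ≤ R + 2 R (R - u)`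
      have key : (r : ℝ) ^ 2 - 2 * r * u + R ^ 2 ≤ R + 2 * R * (R - u) := by
        have e1 : (R - r) ^ 2 ≤ R := by
          have : 0 ≤ √R := Real.sqrt_nonneg _
          nlinarith
        nlinarith
      have : (1 / (2 * R)) * ((r : ℝ) ^ 2 - 2 * r * u + R ^ 2) ≤ 1 / 2 + (R - u) := by
        calc _ ≤ (1 / (2 * R)) * (R + 2 * R * (R - u)) := by gcongr
          _ = _ := by field_simp
      linarith
    · simp only [hr, not_false_eq_true, Set.indicator_of_notMem, mul_zero, g, f]
      positivity
  rw [hg1, hI, integral_prod_mul (fun ω : Metric.sphere (0 : EuclideanSpace ℝ (Fin n)) 1 =>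
    Real.exp ⟪x, (ω : EuclideanSpace ℝ (Fin n))⟫)
    (fun r => Real.exp (-1 / 2 - R) * J.indicator (fun _ => (1 : ℝ)) r),
    integral_const_mul, integral_indicator hJm] at hle
  refine le_trans ?_ hle
  rw [mul_assoc]
  have hphi : 0 ≤ phi n x := measureReal_nonneg.trans (le_phi x)
  have : R ^ (n - 1) * √R / n ≤ ∫ _ in J, (1 : ℝ) ∂(Measure.volumeIoiPow (n - 1)) := by
    rw [Nat.cast_sub (by omega)] at hJv
    simpa using hJv
  unfold phi at *
  gcongr

/-- The sharp growth rate `φ(x) ≲ e^{|x|} (1 + |x|)^{-(n-1)/2}`. -/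
lemma phi_upper {n : ℕ} (hn : 2 ≤ n) : ∃ A > 0, ∀ x : EuclideanSpace ℝ (Fin n),
    phi n x ≤ A * (Real.exp ‖x‖ * (1 + ‖x‖) ^ (-(((n : ℝ) - 1) / 2))) := by
  set m : ℝ := ((n : ℝ) - 1) / 2 with hm
  have hm0 : 0 ≤ m := by
    have : (2 : ℝ) ≤ n := by exact_mod_cast hn
    rw [hm]; linarith
  set A1 := (sphMeasure n).real Set.univ with hA1
  have hA1p : 0 < A1 := sphMeasure_univ_pos hn
  set A2 : ℝ := (2 * Real.pi) ^ ((n : ℝ) / 2) * n * Real.exp (1 / 2) with hA2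
  have hn0 : (0 : ℝ) < n := by positivity
  have hA2p : 0 < A2 := by positivity
  refine ⟨(A1 + A2) * 2 ^ m, by positivity, fun x => ?_⟩
  set R := ‖x‖ with hR
  have hR0 : 0 ≤ R := norm_nonneg _
  -- the Gaussian comparison covers `R > 1`; on `R ≤ 1` the power of `1 + R` is bounded below
  rcases le_or_gt R 1 with h | h
  · have h1 : (2 : ℝ) ^ m * (1 + R) ^ (-m) ≥ 1 := by
      rw [Real.rpow_neg (by positivity), ← div_eq_mul_inv, ← Real.div_rpow (by norm_num) (by positivity)]
      refine Real.one_le_rpow ?_ hm0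
      rw [le_div_iff₀ (by positivity)]; linarith
    calc phi n x ≤ A1 * Real.exp R := phi_le_exp x
      _ ≤ (A1 + A2) * Real.exp R * 1 := by rw [mul_one]; gcongr; linarith
      _ ≤ (A1 + A2) * Real.exp R * ((2 : ℝ) ^ m * (1 + R) ^ (-m)) := by gcongr
      _ = _ := by ring
  · have hRp : 0 < R := by linarith
    have h1 : R ^ (-m) ≤ (2 : ℝ) ^ m * (1 + R) ^ (-m) := by
      rw [Real.rpow_neg (by positivity), Real.rpow_neg (by positivity), ← div_eq_mul_inv,
        ← Real.div_rpow (by norm_num) (by positivity), ← Real.inv_rpow (by positivity)]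
      refine Real.rpow_le_rpow (by positivity) ?_ hm0
      rw [inv_eq_one_div, div_le_div_iff₀ (by positivity) (by positivity)]; linarith
    have h2 : phi n x ≤ A2 * Real.exp R * R ^ (-m) := by
      have hg := phi_gauss hn x h
      rw [← hR] at hg
      have e1 : R ^ (n - 1) * √R = R ^ ((n : ℝ) / 2) * R ^ m := by
        rw [Real.sqrt_eq_rpow, ← Real.rpow_natCast, ← Real.rpow_add hRp, ← Real.rpow_add hRp,
          Nat.cast_sub (by omega)]
        congr 1
        rw [hm]; push_cast; ring
      have e2 : Real.exp (-1 / 2 - R) = (Real.exp (1 / 2) * Real.exp R)⁻¹ := by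
        rw [← Real.exp_add, ← Real.exp_neg]; congr 1; ring
      rw [e1, e2, Real.mul_rpow (by positivity) hRp.le] at hg
      have p1 : 0 < R ^ ((n : ℝ) / 2) := by positivity
      have p2 : 0 < R ^ m := by positivity
      rw [Real.rpow_neg hRp.le, ← div_eq_mul_inv, le_div_iff₀ p2, hA2]
      have hg2 : phi n x * R ^ m * (Real.exp (1 / 2) * Real.exp R)⁻¹ / n ≤
          (2 * Real.pi) ^ ((n : ℝ) / 2) := by
        refine le_of_mul_le_mul_right ?_ p1
        calc _ = _ := by ring
          _ ≤ _ := hg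
      rw [div_le_iff₀ hn0, ← div_eq_mul_inv, div_le_iff₀ (by positivity)] at hg2
      calc _ ≤ _ := hg2
        _ = _ := by ring
    calc phi n x ≤ A2 * Real.exp R * R ^ (-m) := h2
      _ ≤ (A1 + A2) * Real.exp R * ((2 : ℝ) ^ m * (1 + R) ^ (-m)) := by gcongr; linarith
      _ = _ := by ring

/-! ### The modified Bessel function -/

lemma rpow_le_const_mul_exp {v m : ℝ} (hv : 0 ≤ v) (hm : 0 ≤ m) :
    v ^ m ≤ m ^ m * Real.exp v := by
  rcases hm.eq_or_lt with rfl | hm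
  · simpa using hv
  · have h1 : v / m ≤ Real.exp (v / m) := by linarith [Real.add_one_le_exp (v / m)]
    have h2 : v ≤ m * Real.exp (v / m) := by rwa [div_le_iff₀' hm] at h1
    calc v ^ m ≤ (m * Real.exp (v / m)) ^ m := by gcongr
      _ = m ^ m * Real.exp v := by
        rw [Real.mul_rpow hm.le (Real.exp_pos _).le, ← Real.exp_mul]
        congr 2; field_simp

lemma one_add_sq_le_cosh (s : ℝ) : 1 + s ^ 2 / 2 ≤ Real.cosh s := by
  have h1 : Real.cosh s = 1 + 2 * Real.sinh (s / 2) ^ 2 := by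
    have h := Real.cosh_two_mul (s / 2)
    have h' := Real.cosh_sq (s / 2)
    rw [show 2 * (s / 2) = s by ring] at h
    linarith
  have h2 : (s / 2) ^ 2 ≤ Real.sinh (s / 2) ^ 2 := by
    rcases le_total 0 (s / 2) with h | h
    · have := Real.self_le_sinh_iff.2 h
      gcongr
    · have := Real.sinh_le_self_iff.2 h
      nlinarith
  rw [h1]; linarith

lemma cosh_mul_le_exp (ν : ℝ) {s : ℝ} (hs : 0 ≤ s) :
    Real.cosh (ν * s) ≤ Real.exp (|ν| * s) := by
  rw [← Real.cosh_abs, abs_mul, abs_of_nonneg hs, Real.cosh_eq]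
  have : Real.exp (-(|ν| * s)) ≤ Real.exp (|ν| * s) :=
    Real.exp_le_exp.2 (by have := mul_nonneg (abs_nonneg ν) hs; linarith)
  linarith

lemma besselK_integrand_nonneg (ν t s : ℝ) :
    0 ≤ Real.exp (-t * Real.cosh s) * Real.cosh (ν * s) := by
  have := Real.cosh_pos (ν * s)
  positivity

/-- Obtained from `e^{-y} ≤ b^b y^{-b}` at `y = t e^s / 2 ≤ t cosh s`. It serves both
for integrability and for the bound as `t → 0`. -/
lemma besselK_integrand_le {ν b t s : ℝ} (hb : |ν| < b) (ht : 0 < t) (hs : 0 ≤ s) :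
    Real.exp (-t * Real.cosh s) * Real.cosh (ν * s) ≤
      b ^ b * 2 ^ b * t ^ (-b) * Real.exp (-(b - |ν|) * s) := by
  have hb0 : 0 < b := (abs_nonneg ν).trans_lt hb
  set y := t * (Real.exp s / 2) with hy
  have hy0 : 0 < y := by positivity
  have h1 : Real.exp (-t * Real.cosh s) ≤ Real.exp (-y) := by
    refine Real.exp_le_exp.2 ?_
    have : Real.exp s / 2 ≤ Real.cosh s := by
      rw [Real.cosh_eq]; have := Real.exp_pos (-s); linarith
    have := mul_le_mul_of_nonneg_left this ht.le
    linarith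
  have h2 : Real.exp (-y) ≤ b ^ b * y ^ (-b) := by
    rw [Real.exp_neg, Real.rpow_neg hy0.le, inv_le_iff_one_le_mul₀ (Real.exp_pos _),
      mul_assoc, mul_comm (_)⁻¹, ← mul_assoc, ← div_eq_mul_inv, le_div_iff₀ (by positivity), one_mul]
    exact rpow_le_const_mul_exp hy0.le hb0.le
  have h3 : y ^ (-b) = 2 ^ b * t ^ (-b) * Real.exp (-b * s) := by
    rw [hy, Real.mul_rpow ht.le (by positivity), Real.div_rpow (Real.exp_pos _).le (by norm_num),
      ← Real.exp_mul, Real.rpow_neg (by norm_num : (0 : ℝ) ≤ 2), mul_comm s]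
    field_simp
  calc _ ≤ (b ^ b * y ^ (-b)) * Real.exp (|ν| * s) := by
        gcongr
        · exact h1.trans h2
        · exact cosh_mul_le_exp ν hs
    _ = _ := by
      rw [h3, show -(b - |ν|) * s = -b * s + |ν| * s by ring, Real.exp_add]; ring

lemma besselK_integrableOn (ν : ℝ) {t : ℝ} (ht : 0 < t) :
    IntegrableOn (fun s => Real.exp (-t * Real.cosh s) * Real.cosh (ν * s)) (Set.Ioi 0) := by
  have hb : |ν| < |ν| + 1 := by linarith
  have hi := (integrableOn_exp_mul_Ioi (a := -((|ν| + 1) - |ν|)) (by linarith) 0).const_mul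
    ((|ν| + 1) ^ (|ν| + 1) * 2 ^ (|ν| + 1) * t ^ (-(|ν| + 1)))
  refine hi.mono' (Continuous.aestronglyMeasurable (by fun_prop)) ?_
  filter_upwards [ae_restrict_mem measurableSet_Ioi] with s hs
  rw [Real.norm_eq_abs, abs_of_nonneg (besselK_integrand_nonneg ν t s)]
  exact besselK_integrand_le hb ht (le_of_lt hs)

/-- The bound near `0`. Taking `b` strictly above `|ν|` avoids the logarithm at `ν = 0`. -/
lemma besselK_small {ν b : ℝ} (hb : |ν| < b) :
    ∃ A > 0, ∀ t > 0, besselK ν t ≤ A * t ^ (-b) := by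
  have hb0 : 0 < b := (abs_nonneg ν).trans_lt hb
  have hd : 0 < b - |ν| := by linarith
  refine ⟨b ^ b * 2 ^ b * (1 / (b - |ν|)), by positivity, fun t ht => ?_⟩
  have hi := (integrableOn_exp_mul_Ioi (a := -(b - |ν|)) (by linarith) 0).const_mul
    (b ^ b * 2 ^ b * t ^ (-b))
  calc besselK ν t ≤ ∫ s in Set.Ioi (0 : ℝ), b ^ b * 2 ^ b * t ^ (-b) * Real.exp (-(b - |ν|) * s) :=
        setIntegral_mono_on (besselK_integrableOn ν ht) hi measurableSet_Ioi
          fun s hs => besselK_integrand_le hb ht (le_of_lt hs)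
    _ = _ := by
      rw [integral_const_mul, integral_exp_mul_Ioi (by linarith), mul_zero, Real.exp_zero,
        neg_div_neg_eq]
      ring

/-- The bound at infinity, by comparison of `cosh s ≥ 1 + s² / 2` with a Gaussian. -/
lemma besselK_large (ν : ℝ) :
    ∃ A > 0, ∀ t ≥ 1, besselK ν t ≤ A * (t ^ (-(1 / 2) : ℝ) * Real.exp (-t)) := by
  refine ⟨Real.exp (ν ^ 2) * √Real.pi, by positivity, fun t ht => ?_⟩
  have ht0 : 0 < t := by linarith
  have hi := ((integrable_exp_neg_mul_sq (b := t / 4) (by positivity)).integrableOn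
    (s := Set.Ioi 0)).const_mul (Real.exp (-t) * Real.exp (ν ^ 2))
  calc besselK ν t ≤ ∫ s in Set.Ioi (0 : ℝ),
          Real.exp (-t) * Real.exp (ν ^ 2) * Real.exp (-(t / 4) * s ^ 2) := by
        refine setIntegral_mono_on (besselK_integrableOn ν ht0) hi measurableSet_Ioi
          fun s hs => ?_
        have hs0 : 0 ≤ s := le_of_lt hs
        calc _ ≤ Real.exp (-t * Real.cosh s) * Real.exp (|ν| * s) := by
              gcongr; exact cosh_mul_le_exp ν hs0
          _ ≤ _ := by
            rw [← Real.exp_add, ← Real.exp_add, ← Real.exp_add]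
            refine Real.exp_le_exp.2 ?_
            have h1 := mul_le_mul_of_nonneg_left (one_add_sq_le_cosh s) ht0.le
            have h2 : |ν| * s ≤ s ^ 2 / 4 + ν ^ 2 := by
              rw [← sq_abs ν]; nlinarith [sq_nonneg (s / 2 - |ν|)]
            have h3 : s ^ 2 / 4 ≤ t * (s ^ 2 / 4) := le_mul_of_one_le_left (by positivity) ht
            linarith
    _ = _ := by
      rw [integral_const_mul, integral_gaussian_Ioi, Real.rpow_neg ht0.le, ← Real.sqrt_eq_rpow,
        show Real.pi / (t / 4) = 2 ^ 2 * (Real.pi / t) by field_simp; norm_num,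
        Real.sqrt_mul (by norm_num), Real.sqrt_sq (by norm_num), Real.sqrt_div Real.pi_pos.le]
      field_simp

lemma besselK_pos (ν : ℝ) {t : ℝ} (ht : 0 < t) : 0 < besselK ν t := by
  unfold besselK
  rw [setIntegral_pos_iff_support_of_nonneg_ae
    (.of_forall fun s => besselK_integrand_nonneg ν t s) (besselK_integrableOn ν ht)]
  have : (Function.support fun s => Real.exp (-t * Real.cosh s) * Real.cosh (ν * s)) = Set.univ := by
    ext s
    simp [(Real.cosh_pos (ν * s)).ne']
  rw [this]; simp

lemma besselK_measurable (ν : ℝ) : Measurable (besselK ν) := by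
  have h : StronglyMeasurable (fun z : ℝ × ℝ => Real.exp (-z.1 * Real.cosh z.2) * Real.cosh (ν * z.2)) :=
    Continuous.stronglyMeasurable (by fun_prop)
  exact (h.integral_prod_right' (ν := volume.restrict (Set.Ioi 0))).measurable

lemma hEPD_measurable (μ : ℝ) : Measurable (hEPD μ) :=
  (measurable_id.pow_const _).mul (besselK_measurable _)

lemma hEPD_pos (μ : ℝ) {t : ℝ} (ht : 0 < t) : 0 < hEPD μ t :=
  mul_pos (Real.rpow_pos_of_pos ht _) (besselK_pos _ ht)

lemma phi_measurable {n : ℕ} (x : EuclideanSpace ℝ (Fin n)) :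
    Measurable fun l : ℝ => phi n (l • x) := by
  have h : StronglyMeasurable (fun z : ℝ × Metric.sphere (0 : EuclideanSpace ℝ (Fin n)) 1 =>
      Real.exp ⟪z.1 • x, (z.2 : EuclideanSpace ℝ (Fin n))⟫) :=
    Continuous.stronglyMeasurable (by fun_prop)
  exact (h.integral_prod_right' (ν := sphMeasure n)).measurable

/-! ### The scale-invariant majorant and the bounds on `b_q` -/

/-- With `v = 2 + s - R ≥ 1`, one has `(1 + s) / (1 + R) ≤ v`, and `v ^ m` is absorbed
by `e^v`. -/
lemma exp_mul_rpow_le {m s R : ℝ} (hm : 0 ≤ m) (hs : 0 < s) (hR : 0 ≤ R) (hRs : R ≤ s + 1) :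
    Real.exp (-s) * (Real.exp R * (1 + R) ^ (-m)) ≤ m ^ m * Real.exp 2 * s ^ (-m) := by
  have h1 : ((1 + s) / (1 + R)) ^ m ≤ (2 + (s - R)) ^ m := by
    refine Real.rpow_le_rpow (by positivity) ?_ hm
    rw [div_le_iff₀ (by positivity)]
    nlinarith
  have h2 := h1.trans (rpow_le_const_mul_exp (v := 2 + (s - R)) (by linarith) hm)
  rw [Real.div_rpow (by positivity) (by positivity), div_le_iff₀ (by positivity)] at h2
  have h3 : s ^ m ≤ (1 + s) ^ m := Real.rpow_le_rpow hs.le (by linarith) hm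
  rw [Real.rpow_neg (by positivity), Real.rpow_neg hs.le, ← div_eq_mul_inv (_ * _),
    le_div_iff₀ (by positivity), ← div_eq_mul_inv, mul_div_assoc', div_mul_eq_mul_div,
    div_le_iff₀ (by positivity)]
  have h4 : Real.exp (2 + (s - R)) = Real.exp 2 * (Real.exp s / Real.exp R) := by
    rw [Real.exp_add, Real.exp_sub]
  rw [h4] at h2
  calc _ ≤ Real.exp (-s) * Real.exp R *
        (m ^ m * (Real.exp 2 * (Real.exp s / Real.exp R)) * (1 + R) ^ m) := by
        gcongr; exact h3.trans h2
    _ = _ := by rw [Real.exp_neg]; field_simp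

/-- A majorant depending on `s = λ t` only, valid for all `R = λ |x| ≤ s + 1`. It behaves like
`s^{(μ+1)/2 - b + q - 1}` at `0`, for some `|μ - 1| / 2 < b < (μ + 1) / 2 + q`, and like
`s^{q + (μ-n+1)/2 - 1}` at infinity; the two hypotheses are integrability at the two ends. -/
lemma majorant (n : ℕ) (hn : 2 ≤ n) (μ q : ℝ)
    (h1 : |(μ - 1) / 2| < (μ + 1) / 2 + q) (h2 : q + (μ - n + 1) / 2 < 0) :
    ∃ G : ℝ → ℝ, IntegrableOn G (Set.Ioi 0) ∧ ∀ s > 0, 0 ≤ G s ∧ ∀ R ≥ 0, R ≤ s + 1 →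
      hEPD μ s * (Real.exp R * (1 + R) ^ (-(((n : ℝ) - 1) / 2))) * s ^ (q - 1) ≤ G s := by
  obtain ⟨b, hb1, hb2⟩ := exists_between h1
  obtain ⟨A1, hA1, hK1⟩ := besselK_small hb1
  obtain ⟨A2, hA2, hK2⟩ := besselK_large ((μ - 1) / 2)
  set m : ℝ := ((n : ℝ) - 1) / 2 with hm
  have hm0 : 0 ≤ m := by
    have : (2 : ℝ) ≤ n := by exact_mod_cast hn
    rw [hm]; linarith
  let G : ℝ → ℝ := fun s => if s ≤ 1 then A1 * Real.exp 2 * s ^ ((μ + 1) / 2 - b + (q - 1))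
    else A2 * (m ^ m * Real.exp 2) * s ^ (q + (μ - n + 1) / 2 - 1)
  refine ⟨G, ?_, fun s hs => ⟨?_, fun R hR hRs => ?_⟩⟩
  · rw [← Set.Ioc_union_Ioi_eq_Ioi (zero_le_one (α := ℝ))]
    refine IntegrableOn.union ?_ ?_
    · have hi := (intervalIntegral.intervalIntegrable_rpow' (a := 0) (b := 1)
        (r := (μ + 1) / 2 - b + (q - 1)) (by linarith)).1.const_mul (A1 * Real.exp 2)
      refine IntegrableOn.congr_fun hi (fun s hs => ?_) measurableSet_Ioc
      simp only [G, if_pos hs.2]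
    · have hi := (integrableOn_Ioi_rpow_of_lt (a := q + (μ - n + 1) / 2 - 1) (by linarith)
        zero_lt_one).const_mul (A2 * (m ^ m * Real.exp 2))
      refine IntegrableOn.congr_fun hi (fun s hs => ?_) measurableSet_Ioi
      simp only [G, if_neg (not_le.2 (Set.mem_Ioi.1 hs))]
  · simp only [G]
    split_ifs <;> positivity
  · have hK0 := (besselK_pos ((μ - 1) / 2) hs).le
    by_cases h : s ≤ 1
    · simp only [G, if_pos h]
      have e1 : (1 + R) ^ (-m) ≤ 1 := Real.rpow_le_one_of_one_le_of_nonpos (by linarith) (by linarith)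
      calc _ ≤ (s ^ ((μ + 1) / 2) * (A1 * s ^ (-b))) * (Real.exp 2 * 1) * s ^ (q - 1) := by
            unfold hEPD
            gcongr
            · exact hK1 s hs
            · linarith
        _ = _ := by
          rw [Real.rpow_add hs, sub_eq_add_neg _ b, Real.rpow_add hs]; ring
    · simp only [G, if_neg h]
      calc _ ≤ (s ^ ((μ + 1) / 2) * (A2 * (s ^ (-(1 / 2) : ℝ) * Real.exp (-s)))) *
              (Real.exp R * (1 + R) ^ (-m)) * s ^ (q - 1) := by
            unfold hEPD
            gcongr
            exact hK2 s (by linarith)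
        _ = (s ^ ((μ + 1) / 2) * (A2 * s ^ (-(1 / 2) : ℝ))) *
              (Real.exp (-s) * (Real.exp R * (1 + R) ^ (-m))) * s ^ (q - 1) := by ring
        _ ≤ (s ^ ((μ + 1) / 2) * (A2 * s ^ (-(1 / 2) : ℝ))) *
              (m ^ m * Real.exp 2 * s ^ (-m)) * s ^ (q - 1) := by
            have := exp_mul_rpow_le hm0 hs hR hRs
            gcongr
        _ = _ := by
          rw [show q + (μ - n + 1) / 2 - 1 = (μ + 1) / 2 + -(1 / 2) + -m + (q - 1) by rw [hm]; ring,
            Real.rpow_add hs, Real.rpow_add hs, Real.rpow_add hs]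
          ring

/-- The two-sided bound under the exponent conditions alone, by the substitution `s = λ t`. -/
theorem bq_bounds_of_exponents (n : ℕ) (hn : 2 ≤ n) (μ q : ℝ)
    (h1 : |(μ - 1) / 2| < (μ + 1) / 2 + q) (h2 : q + (μ - n + 1) / 2 < 0) :
    ∃ c > (0 : ℝ), ∃ C > (0 : ℝ), ∀ t ≥ (1 : ℝ),
      (∀ x : EuclideanSpace ℝ (Fin n), c * t ^ (-q) ≤ bq n μ q t x) ∧
      (∀ x : EuclideanSpace ℝ (Fin n), ‖x‖ ≤ t + 1 → bq n μ q t x ≤ C * t ^ (-q)) := by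
  obtain ⟨G, hGi, hG⟩ := majorant n hn μ q h1 h2
  obtain ⟨A, hA, hphi⟩ := phi_upper hn
  set S := (sphMeasure n).real Set.univ with hS
  have hSp : 0 < S := sphMeasure_univ_pos hn
  let H : ℝ → ℝ := fun s => hEPD μ s * s ^ (q - 1)
  have hHm : Measurable H := (hEPD_measurable μ).mul (measurable_id.pow_const _)
  have hHp : ∀ s > 0, 0 < H s := fun s hs => mul_pos (hEPD_pos μ hs) (Real.rpow_pos_of_pos hs _)
  have hHG : ∀ s > 0, H s ≤ G s := fun s hs => by
    simpa using (hG s hs).2 0 le_rfl (by linarith)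
  have hHi : IntegrableOn H (Set.Ioi 0) := by
    refine hGi.mono' hHm.aestronglyMeasurable ?_
    filter_upwards [ae_restrict_mem measurableSet_Ioi] with s hs
    rw [Real.norm_eq_abs, abs_of_pos (hHp s hs)]
    exact hHG s hs
  have hI : 0 < ∫ s in Set.Ioc (0 : ℝ) 1, H s := by
    rw [setIntegral_pos_iff_support_of_nonneg_ae]
    · have : Function.support H ∩ Set.Ioc 0 1 = Set.Ioc 0 1 :=
        Set.inter_eq_right.2 fun s hs => (hHp s hs.1).ne'
      rw [this]; simp
    · filter_upwards [ae_restrict_mem measurableSet_Ioc] with s hs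
      exact (hHp s hs.1).le
    · exact hHi.mono_set Set.Ioc_subset_Ioi_self
  have hJ : 0 < ∫ s in Set.Ioi (0 : ℝ), G s := by
    refine hI.trans_le ?_
    calc _ ≤ ∫ s in Set.Ioi (0 : ℝ), H s := by
          refine setIntegral_mono_set hHi ?_ Set.Ioc_subset_Ioi_self.eventuallyLE
          filter_upwards [ae_restrict_mem measurableSet_Ioi] with s hs
          exact (hHp s hs).le
      _ ≤ _ := setIntegral_mono_on hHi hGi measurableSet_Ioi hHG
  refine ⟨S * ∫ s in Set.Ioc (0 : ℝ) 1, H s, by positivity,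
    A * ∫ s in Set.Ioi (0 : ℝ), G s, by positivity, fun t ht => ?_⟩
  have ht0 : 0 < t := by linarith
  have hrew : ∀ x : EuclideanSpace ℝ (Fin n), ∀ l > 0,
      hEPD μ (l * t) * phi n (l • x) * l ^ (q - 1) =
        t ^ (1 - q) * (H (l * t) * phi n (l • x)) := by
    intro x l hl
    simp only [H]
    rw [Real.mul_rpow hl.le ht0.le, show 1 - q = -(q - 1) by ring, Real.rpow_neg ht0.le]
    field_simp
  have hHt : IntegrableOn (fun l => H (l * t)) (Set.Ioi 0) := by
    rw [integrableOn_Ioi_comp_mul_right_iff _ _ ht0]; simpa using hHi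
  have hGt : IntegrableOn (fun l => G (l * t)) (Set.Ioi 0) := by
    rw [integrableOn_Ioi_comp_mul_right_iff _ _ ht0]; simpa using hGi
  have hpow : t ^ (1 - q) * t⁻¹ = t ^ (-q) := by
    rw [Real.rpow_sub ht0, Real.rpow_one, Real.rpow_neg ht0.le]; field_simp
  refine ⟨fun x => ?_, fun x hx => ?_⟩
  · -- without integrability the integral defining `bq` would be the junk value `0`
    have hF : IntegrableOn (fun l => t ^ (1 - q) * (H (l * t) * phi n (l • x))) (Set.Ioc 0 1) := by
      refine Integrable.const_mul ?_ _
      refine Integrable.mul_bdd (c := S * Real.exp ‖x‖) (hHt.mono_set Set.Ioc_subset_Ioi_self)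
        (phi_measurable x).aestronglyMeasurable ?_
      filter_upwards [ae_restrict_mem measurableSet_Ioc] with l hl
      rw [Real.norm_eq_abs, abs_of_pos (hSp.trans_le (le_phi _))]
      refine (phi_le_exp _).trans ?_
      gcongr
      rw [norm_smul, Real.norm_eq_abs, abs_of_pos hl.1]
      exact mul_le_of_le_one_left (norm_nonneg _) hl.2
    have hsub : ∫ l in Set.Ioc (0 : ℝ) 1, H (l * t) = t⁻¹ * ∫ s in Set.Ioc (0 : ℝ) t, H s := by
      rw [← intervalIntegral.integral_of_le zero_le_one, ← intervalIntegral.integral_of_le ht0.le,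
        intervalIntegral.integral_comp_mul_right _ ht0.ne']
      simp
    calc (S * ∫ s in Set.Ioc (0 : ℝ) 1, H s) * t ^ (-q)
        ≤ (S * ∫ s in Set.Ioc (0 : ℝ) t, H s) * t ^ (-q) := by
          gcongr
          · filter_upwards [ae_restrict_mem measurableSet_Ioc] with s hs
            exact (hHp s hs.1).le
          · exact hHi.mono_set Set.Ioc_subset_Ioi_self
      _ = ∫ l in Set.Ioc (0 : ℝ) 1, t ^ (1 - q) * (H (l * t) * S) := by
          rw [integral_const_mul, integral_mul_const, hsub, ← hpow]; ring
      _ ≤ ∫ l in Set.Ioc (0 : ℝ) 1, t ^ (1 - q) * (H (l * t) * phi n (l • x)) := by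
          refine setIntegral_mono_on
            (((hHt.mono_set Set.Ioc_subset_Ioi_self).mul_const S).const_mul _) hF
            measurableSet_Ioc fun l hl => ?_
          have := (hHp (l * t) (mul_pos hl.1 ht0)).le
          have := le_phi (l • x)
          gcongr
      _ = bq n μ q t x := (setIntegral_congr_fun measurableSet_Ioc fun l hl => hrew x l hl.1).symm
  · have hGt' := ((hGt.mono_set (t := Set.Ioi 0) (s := Set.Ioc 0 1) Set.Ioc_subset_Ioi_self).const_mul A).const_mul
      (t ^ (1 - q))
    calc bq n μ q t x
        = ∫ l in Set.Ioc (0 : ℝ) 1, t ^ (1 - q) * (H (l * t) * phi n (l • x)) :=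
          setIntegral_congr_fun measurableSet_Ioc fun l hl => hrew x l hl.1
      _ ≤ ∫ l in Set.Ioc (0 : ℝ) 1, t ^ (1 - q) * (A * G (l * t)) := by
          refine integral_mono_of_nonneg ?_ hGt' ?_
          · filter_upwards [ae_restrict_mem measurableSet_Ioc] with l hl
            have := hHp (l * t) (mul_pos hl.1 ht0)
            have := hSp.trans_le (le_phi (l • x))
            simp only [Pi.zero_apply]
            positivity
          · filter_upwards [ae_restrict_mem measurableSet_Ioc] with l hl
            have hlt : 0 < l * t := mul_pos hl.1 ht0
            have hR : ‖l • x‖ ≤ l * t + 1 := by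
              rw [norm_smul, Real.norm_eq_abs, abs_of_pos hl.1]
              nlinarith [hl.1, hl.2]
            have hb := (hG (l * t) hlt).2 ‖l • x‖ (norm_nonneg _) hR
            have hp := hphi (l • x)
            have hH := (hHp (l * t) hlt).le
            have : H (l * t) * phi n (l • x) ≤ A * G (l * t) := by
              calc _ ≤ H (l * t) * (A * (Real.exp ‖l • x‖ *
                    (1 + ‖l • x‖) ^ (-(((n : ℝ) - 1) / 2)))) := by gcongr
                _ = A * (hEPD μ (l * t) * (Real.exp ‖l • x‖ *
                    (1 + ‖l • x‖) ^ (-(((n : ℝ) - 1) / 2))) * (l * t) ^ (q - 1)) := by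
                    simp only [H]; ring
                _ ≤ _ := by gcongr
            show t ^ (1 - q) * _ ≤ t ^ (1 - q) * _
            gcongr
      _ = t ^ (1 - q) * (A * ∫ l in Set.Ioc (0 : ℝ) 1, G (l * t)) := by
          rw [integral_const_mul, integral_const_mul]
      _ ≤ t ^ (1 - q) * (A * ∫ l in Set.Ioi (0 : ℝ), G (l * t)) := by
          gcongr
          · filter_upwards [ae_restrict_mem measurableSet_Ioi] with l hl
            exact (hG _ (mul_pos hl ht0)).1
          · exact Set.Ioc_subset_Ioi_self
      _ = _ := by
          rw [integral_comp_mul_right_Ioi _ _ ht0, ← hpow]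
          simp
          ring

/-! ### The exponents -/

lemma pS_root {d α : ℝ} (hd : 1 < d) (hα : 0 ≤ α) :
    0 < pS d α ∧ 2 + (d + 1 + 2 * α) * pS d α - (d - 1) * pS d α ^ 2 = 0 := by
  have hd1 : 0 < d - 1 := by linarith
  have hs := Real.sq_sqrt (show 0 ≤ (d + 1 + 2 * α) ^ 2 + 8 * (d - 1) by positivity)
  unfold pS
  set r := √((d + 1 + 2 * α) ^ 2 + 8 * (d - 1))
  have hr : 0 ≤ r := Real.sqrt_nonneg _
  refine ⟨div_pos (by linarith) (by linarith), ?_⟩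
  field_simp
  nlinarith

/-- For `u = 1 / p`, these inequalities read `0 < q + μ` and `-1 < q`: the integrability of
`h(s) s^{q-1}` at `0`. -/
lemma exponent_ineqs {n α μ u : ℝ} (hn : 2 ≤ n) (hα : 0 ≤ α) (hμ0 : 0 < μ)
    (hμ : μ < muStar n α) (hu : 0 < u)
    (hroot : 2 * u ^ 2 + (n + μ + 1 + 2 * α) * u = n + μ - 1) :
    u < (n + μ - 1) / 2 ∧ u < (n - μ + 1) / 2 := by
  refine ⟨by nlinarith, ?_⟩
  have hN : 0 < n + 2 + α := by linarith
  -- the threshold `μ*` is exactly where the root `u = 1 / p` reaches `n / (n + 2 + α)`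
  have hu1 : u * (n + 2 + α) < n := by
    unfold muStar at hμ
    rw [lt_div_iff₀ (by positivity)] at hμ
    by_contra! hcon
    have hu2 : n / (n + 2 + α) ≤ u := by rwa [div_le_iff₀ hN]
    have hlt : u < 1 := by nlinarith
    set v := n / (n + 2 + α) with hv
    have hvN : v * (n + 2 + α) = n := by rw [hv]; field_simp
    have hv0 : 0 < v := by positivity
    have hmono : 2 * v ^ 2 + (n + μ + 1 + 2 * α) * v ≤ n + μ - 1 := by
      rw [← hroot]; gcongr
    have h3 : (2 * v ^ 2 + (n + μ + 1 + 2 * α) * v) * (n + 2 + α) ^ 2 ≤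
        (n + μ - 1) * (n + 2 + α) ^ 2 := by gcongr
    have h4 : (2 * v ^ 2 + (n + μ + 1 + 2 * α) * v) * (n + 2 + α) ^ 2 =
        2 * n ^ 2 + (n + μ + 1 + 2 * α) * n * (n + 2 + α) := by
      calc _ = 2 * (v * (n + 2 + α)) ^ 2 +
            (n + μ + 1 + 2 * α) * (v * (n + 2 + α)) * (n + 2 + α) := by ring
        _ = _ := by rw [hvN]
    rw [h4] at h3
    nlinarith
  nlinarith

/-- under the assumptions `n ≥ 3, α ≥ 0` or `n = 2, α > 0`;
`0 < μ < μ*(n,α)`, `p = p_S(n+μ,α)`, `q = (n−μ−1)/2 − 1/p`, there are `c, C > 0`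
such that for all `t ≥ 1`: `b_q(t,x) ≥ c t^{−q}` for every `x`, and
`b_q(t,x) ≤ C t^{−q}` for `|x| ≤ t+1`. -/
theorem bq_two_sided_bounds (n : ℕ) (α μ p q : ℝ)
    (hnα : (3 ≤ n ∧ 0 ≤ α) ∨ (n = 2 ∧ 0 < α))
    (hμ0 : 0 < μ) (hμ : μ < muStar n α)
    (hp : p = pS ((n : ℝ) + μ) α)
    (hq : q = ((n : ℝ) - μ - 1) / 2 - 1 / p) :
    ∃ c > (0 : ℝ), ∃ C > (0 : ℝ), ∀ t ≥ (1 : ℝ),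
      (∀ x : EuclideanSpace ℝ (Fin n), c * t ^ (-q) ≤ bq n μ q t x) ∧
      (∀ x : EuclideanSpace ℝ (Fin n), ‖x‖ ≤ t + 1 → bq n μ q t x ≤ C * t ^ (-q)) := by
  have hn : 2 ≤ n := by omega
  have hα : 0 ≤ α := by rcases hnα with h | h <;> linarith [h.2]
  have hnR : (2 : ℝ) ≤ n := by exact_mod_cast hn
  obtain ⟨hp0, hroot⟩ := pS_root (d := n + μ) (by linarith) hα
  rw [← hp] at hp0 hroot
  have hu : 0 < 1 / p := by positivity
  have hr : 2 * (1 / p) ^ 2 + ((n : ℝ) + μ + 1 + 2 * α) * (1 / p) = n + μ - 1 := by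
    field_simp; linarith
  obtain ⟨e1, e2⟩ := exponent_ineqs hnR hα hμ0 hμ hu hr
  refine bq_bounds_of_exponents n hn μ q ?_ ?_
  · rw [abs_lt]; constructor <;> linarith
  · linarith
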